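/- At side length a = π/3 the vertex patterns (3,3,4,4) and (3,4,6) both have angle defect zero: 4·arcsin(√3/3) + 4·arcsin(√6/3) = 2π and 2·arcsin(√3/3) + 2·arcsin(√6/3) + π = 2π. Consequently a_c((3,3,4,4)) = a_c((3,4,6)) = π/3. -/

import Mathlib

/-- The angle defect `K_a(p) = 2π − Σ_{f ∈ p} 2·arcsin(cos(π/f)/cos(a/2))` of a
vertex pattern given as a list. -/
noncomputable def K (p : List ℕ) (a : ℝ) : ℝ :=
  2 * Real.pi -
    (p.map (fun f => 2 * Real.arcsin (Real.cos (Real.pi / (f : ℝ)) / Real.cos (a / 2)))).sum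

/-- The critical side-length `a_c(p) = max{a ∈ [0, 2π/f_N] : K_a(p) ≥ 0}` of a
vertex pattern, where `f_N` is the last (largest) entry. -/
noncomputable def ac (p : List ℕ) : ℝ :=
  sSup {a : ℝ | a ∈ Set.Icc 0 (2 * Real.pi / (p.getLast! : ℝ)) ∧ 0 ≤ K p a}

theorem aux_sum : Real.arcsin (Real.sqrt 3 / 3) + Real.arcsin (Real.sqrt 6 / 3) = Real.pi / 2 := by
  have h : Real.arccos (Real.sqrt 3 / 3) = Real.arcsin (Real.sqrt 6 / 3) := by
    rw [Real.arccos_eq_arcsin (by positivity)]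
    congr 1
    rw [Real.sqrt_eq_iff_mul_self_eq_of_pos (by positivity)]
    have h3 := Real.mul_self_sqrt (show (0:ℝ) ≤ 3 by norm_num)
    have h6 := Real.mul_self_sqrt (show (0:ℝ) ≤ 6 by norm_num)
    nlinarith
  rw [← h, Real.arccos]
  ring

theorem aux_r3 : (1 / 2 : ℝ) / (Real.sqrt 3 / 2) = Real.sqrt 3 / 3 := by
  have h3 := Real.mul_self_sqrt (show (0:ℝ) ≤ 3 by norm_num)
  have hp : 0 < Real.sqrt 3 := by positivity
  rw [div_eq_iff (by positivity)]
  nlinarith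

theorem aux_r4 : (Real.sqrt 2 / 2 : ℝ) / (Real.sqrt 3 / 2) = Real.sqrt 6 / 3 := by
  have h3 := Real.mul_self_sqrt (show (0:ℝ) ≤ 3 by norm_num)
  have hp : 0 < Real.sqrt 3 := by positivity
  have h6 : Real.sqrt 6 = Real.sqrt 2 * Real.sqrt 3 := by
    rw [← Real.sqrt_mul (by norm_num)]; norm_num
  rw [div_eq_iff (by positivity), h6]
  linear_combination (-Real.sqrt 2 / 6) * h3

theorem K_3344 (a : ℝ) : K [3, 3, 4, 4] a = 2 * Real.pi
    - 4 * (Real.arcsin (1 / 2 / Real.cos (a / 2))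
      + Real.arcsin (Real.sqrt 2 / 2 / Real.cos (a / 2))) := by
  simp only [K, List.bind_eq_flatMap, List.pure_def, List.flatMap_cons, List.flatMap_nil,
    List.cons_append, List.nil_append, List.map_cons, List.map_nil, List.sum_cons, List.sum_nil, Nat.cast_ofNat,
    Real.cos_pi_div_three, Real.cos_pi_div_four]
  ring

theorem cos_half : Real.cos (Real.pi / 3 / 2) = Real.sqrt 3 / 2 := by
  rw [← Real.cos_pi_div_six]; congr 1; ring

theorem K_3344_zero : K [3, 3, 4, 4] (Real.pi / 3) = 0 := by
  rw [K_3344, cos_half, aux_r3, aux_r4, aux_sum]; ring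

theorem K_346_zero : K [3, 4, 6] (Real.pi / 3) = 0 := by
  simp only [K, List.bind_eq_flatMap, List.pure_def, List.flatMap_cons, List.flatMap_nil,
    List.cons_append, List.nil_append, List.map_cons, List.map_nil, List.sum_cons, List.sum_nil, Nat.cast_ofNat,
    Real.cos_pi_div_three, Real.cos_pi_div_four, Real.cos_pi_div_six, cos_half, aux_r3, aux_r4]
  rw [div_self (by positivity), Real.arcsin_one]
  linear_combination (-2) * aux_sum

theorem K_3344_neg (a : ℝ) (h1 : Real.pi / 3 < a) (h2 : a ≤ Real.pi / 2) :
    K [3, 3, 4, 4] a < 0 := by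
  have hpi := Real.pi_pos
  have hlt : Real.cos (a / 2) < Real.sqrt 3 / 2 := by
    rw [← cos_half]
    exact Real.cos_lt_cos_of_nonneg_of_le_pi (by linarith) (by linarith) (by linarith)
  have hge : Real.sqrt 2 / 2 ≤ Real.cos (a / 2) := by
    rw [← Real.cos_pi_div_four]
    exact Real.cos_le_cos_of_nonneg_of_le_pi (by linarith) (by linarith) (by linarith)
  have hs2 : 1 ≤ Real.sqrt 2 := Real.one_le_sqrt.mpr (by norm_num)
  have hc : 0 < Real.cos (a / 2) := by linarith
  have e1 : Real.arcsin (Real.sqrt 3 / 3) < Real.arcsin (1 / 2 / Real.cos (a / 2)) := by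
    rw [← aux_r3]
    apply Real.arcsin_lt_arcsin
    · exact le_trans (by norm_num) (show (0:ℝ) ≤ _ by positivity)
    · exact div_lt_div_of_pos_left (by norm_num) hc hlt
    · rw [div_le_one hc]; linarith
  have e2 : Real.arcsin (Real.sqrt 6 / 3) ≤ Real.arcsin (Real.sqrt 2 / 2 / Real.cos (a / 2)) := by
    rw [← aux_r4]
    apply Real.arcsin_le_arcsin
    exact div_le_div_of_nonneg_left (by positivity) hc hlt.le
  rw [K_3344]
  have := aux_sum
  linarith

/-- At side length π/3 the patterns (3,3,4,4) and (3,4,6) both have angle defect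
zero: 4·arcsin(√3/3) + 4·arcsin(√6/3) = 2π and 2·arcsin(√3/3) + 2·arcsin(√6/3) + π = 2π.
Consequently a_c((3,3,4,4)) = a_c((3,4,6)) = π/3. -/
theorem stmt11 :
    4 * Real.arcsin (Real.sqrt 3 / 3) + 4 * Real.arcsin (Real.sqrt 6 / 3) = 2 * Real.pi ∧
    2 * Real.arcsin (Real.sqrt 3 / 3) + 2 * Real.arcsin (Real.sqrt 6 / 3) + Real.pi
      = 2 * Real.pi ∧
    K [3, 3, 4, 4] (Real.pi / 3) = 0 ∧ K [3, 4, 6] (Real.pi / 3) = 0 ∧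
    ac [3, 3, 4, 4] = Real.pi / 3 ∧ ac [3, 4, 6] = Real.pi / 3 := by
  have hpi := Real.pi_pos
  have hs := aux_sum
  refine ⟨by linarith, by linarith, K_3344_zero, K_346_zero, ?_, ?_⟩
  · apply IsGreatest.csSup_eq
    have hl : (([3, 3, 4, 4] : List ℕ).getLast! : ℝ) = 4 := by norm_num [List.getLast!]
    refine ⟨⟨⟨by positivity, ?_⟩, K_3344_zero.ge⟩, ?_⟩
    · rw [hl]; linarith
    · rintro a ⟨⟨_, ha⟩, hK⟩
      rw [hl] at ha
      by_contra! h
      have := K_3344_neg a h (by linarith)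
      linarith
  · apply IsGreatest.csSup_eq
    have hl : (([3, 4, 6] : List ℕ).getLast! : ℝ) = 6 := by norm_num [List.getLast!]
    refine ⟨⟨⟨by positivity, ?_⟩, K_346_zero.ge⟩, ?_⟩
    · rw [hl]; linarith
    · rintro a ⟨⟨_, ha⟩, _⟩
      rw [hl] at ha
      linarith
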